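/- arXiv:2505.10301 — 2 statements merged into one kernel-verified Lean document; each statement's English description precedes it below -/
import Mathlib

section
/- Let M be a nonzero finite-dimensional simple U_v-module which is a weight module, let 1 ≤ j ≤ n−1, and let X be any of the elements E_j, F_j, Ē_j, F̄_j of U_v. If m ∈ M is nonzero and t ∈ F satisfies X·m = t·m, then t = 0; i.e. the action of X on M has no eigenvector with nonzero eigenvalue. (Proposition 3.4 of the paper.) -/
open scoped BigOperators

noncomputable section

namespace QueerPaper

/-- The field `F = ℚ(v)` of rational functions. -/
abbrev F : Type := RatFunc ℚ

/-- The element `v` of `F`. -/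
noncomputable def v : F := RatFunc.X

lemma v_ne_zero : v ≠ 0 := RatFunc.X_ne_zero

/-- `v` as a unit of `F`. -/
noncomputable def vU : Fˣ := Units.mk0 v v_ne_zero

/-- Generators of the quantum queer superalgebra `U_v(q_n)`:
`K_i, K_i⁻¹, K̄_i` for `1 ≤ i ≤ n` (here indexed by `Fin n`, 0-based) and
`E_j, Ē_j, F_j, F̄_j` for `1 ≤ j ≤ n−1` (here indexed by `Fin (n-1)`, 0-based). -/
inductive QGen (n : ℕ) : Type
  | K : Fin n → QGen n
  | Kinv : Fin n → QGen n
  | Kb : Fin n → QGen n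
  | E : Fin (n - 1) → QGen n
  | Eb : Fin (n - 1) → QGen n
  | Fg : Fin (n - 1) → QGen n
  | Fb : Fin (n - 1) → QGen n

/-- The free `F`-algebra on the generators. -/
abbrev FA (n : ℕ) : Type := FreeAlgebra F (QGen n)

namespace Pre

variable (n : ℕ)

def K (i : Fin n) : FA n := FreeAlgebra.ι F (QGen.K i)
def Kinv (i : Fin n) : FA n := FreeAlgebra.ι F (QGen.Kinv i)
def Kb (i : Fin n) : FA n := FreeAlgebra.ι F (QGen.Kb i)
def E (j : Fin (n - 1)) : FA n := FreeAlgebra.ι F (QGen.E j)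
def Eb (j : Fin (n - 1)) : FA n := FreeAlgebra.ι F (QGen.Eb j)
def Fg (j : Fin (n - 1)) : FA n := FreeAlgebra.ι F (QGen.Fg j)
def Fb (j : Fin (n - 1)) : FA n := FreeAlgebra.ι F (QGen.Fb j)

end Pre

/-- `Fin (n-1) → Fin n`, preserving the underlying index (paper index `j`). -/
def finL {n : ℕ} (j : Fin (n - 1)) : Fin n := ⟨(j : ℕ), by have := j.2; omega⟩

/-- `Fin (n-1) → Fin n`, shifting the index by one (paper index `j+1`). -/
def finR {n : ℕ} (j : Fin (n - 1)) : Fin n := ⟨(j : ℕ) + 1, by have := j.2; omega⟩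

/-- The pairing `⟨i,j⟩ = δ_{i,j} − δ_{i,j+1}` (in the paper's 1-based indexing;
here both indices are 0-based). -/
def pr {n : ℕ} (i : Fin n) (j : Fin (n - 1)) : ℤ :=
  (if (i : ℕ) = (j : ℕ) then 1 else 0) - (if (i : ℕ) = (j : ℕ) + 1 then 1 else 0)

/-- Kronecker delta with values in `F`. -/
def dlt {m : ℕ} (i j : Fin m) : F := if i = j then 1 else 0

open Pre in
/-- The defining relations (QQ1)–(QQ6) of `U_v(q_n)`. -/
inductive qRel (n : ℕ) : FA n → FA n → Prop
  -- (QQ1)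
  | KKinv (i : Fin n) : qRel n (K n i * Kinv n i) 1
  | KinvK (i : Fin n) : qRel n (Kinv n i * K n i) 1
  | KK (i j : Fin n) : qRel n (K n i * K n j) (K n j * K n i)
  | KKb (i j : Fin n) : qRel n (K n i * Kb n j) (Kb n j * K n i)
  | KbKb (i j : Fin n) :
      qRel n (Kb n i * Kb n j + Kb n j * Kb n i)
        ((dlt i j * (2 / (v ^ 2 - v⁻¹ ^ 2))) • (K n i ^ 2 - Kinv n i ^ 2))
  -- (QQ2)
  | KE (i : Fin n) (j : Fin (n - 1)) :
      qRel n (K n i * E n j) ((v ^ pr i j) • (E n j * K n i))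
  | KEb (i : Fin n) (j : Fin (n - 1)) :
      qRel n (K n i * Eb n j) ((v ^ pr i j) • (Eb n j * K n i))
  | KF (i : Fin n) (j : Fin (n - 1)) :
      qRel n (K n i * Fg n j) ((v ^ (-pr i j)) • (Fg n j * K n i))
  | KFb (i : Fin n) (j : Fin (n - 1)) :
      qRel n (K n i * Fb n j) ((v ^ (-pr i j)) • (Fb n j * K n i))
  -- (QQ3)
  | KbE (j : Fin (n - 1)) :
      qRel n (Kb n (finL j) * E n j - v • (E n j * Kb n (finL j))) (Eb n j * Kinv n (finL j))
  | KbE' (j : Fin (n - 1)) :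
      qRel n (v • (Kb n (finR j) * E n j) - E n j * Kb n (finR j)) (-(Kinv n (finR j) * Eb n j))
  | KbF (j : Fin (n - 1)) :
      qRel n (Kb n (finL j) * Fg n j - v • (Fg n j * Kb n (finL j))) (-(Fb n j * K n (finL j)))
  | KbF' (j : Fin (n - 1)) :
      qRel n (v • (Kb n (finR j) * Fg n j) - Fg n j * Kb n (finR j)) (K n (finR j) * Fb n j)
  | KbEb (j : Fin (n - 1)) :
      qRel n (Kb n (finL j) * Eb n j + v • (Eb n j * Kb n (finL j))) (E n j * Kinv n (finL j))
  | KbEb' (j : Fin (n - 1)) :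
      qRel n (v • (Kb n (finR j) * Eb n j) + Eb n j * Kb n (finR j)) (Kinv n (finR j) * E n j)
  | KbFb (j : Fin (n - 1)) :
      qRel n (Kb n (finL j) * Fb n j + v • (Fb n j * Kb n (finL j))) (Fg n j * K n (finL j))
  | KbFb' (j : Fin (n - 1)) :
      qRel n (v • (Kb n (finR j) * Fb n j) + Fb n j * Kb n (finR j)) (K n (finR j) * Fg n j)
  | KbEcomm (i : Fin n) (j : Fin (n - 1)) (h1 : (i : ℕ) ≠ (j : ℕ)) (h2 : (i : ℕ) ≠ (j : ℕ) + 1) :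
      qRel n (Kb n i * E n j - E n j * Kb n i) 0
  | KbFcomm (i : Fin n) (j : Fin (n - 1)) (h1 : (i : ℕ) ≠ (j : ℕ)) (h2 : (i : ℕ) ≠ (j : ℕ) + 1) :
      qRel n (Kb n i * Fg n j - Fg n j * Kb n i) 0
  | KbEbcomm (i : Fin n) (j : Fin (n - 1)) (h1 : (i : ℕ) ≠ (j : ℕ)) (h2 : (i : ℕ) ≠ (j : ℕ) + 1) :
      qRel n (Kb n i * Eb n j + Eb n j * Kb n i) 0
  | KbFbcomm (i : Fin n) (j : Fin (n - 1)) (h1 : (i : ℕ) ≠ (j : ℕ)) (h2 : (i : ℕ) ≠ (j : ℕ) + 1) :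
      qRel n (Kb n i * Fb n j + Fb n j * Kb n i) 0
  -- (QQ4)
  | EF (i j : Fin (n - 1)) :
      qRel n (E n i * Fg n j - Fg n j * E n i)
        ((dlt i j * (1 / (v - v⁻¹))) •
          (K n (finL i) * Kinv n (finR i) - Kinv n (finL i) * K n (finR i)))
  | EbFb (i j : Fin (n - 1)) :
      qRel n (Eb n i * Fb n j + Fb n j * Eb n i)
        (dlt i j •
          ((1 / (v - v⁻¹)) • (K n (finL i) * K n (finR i) - Kinv n (finL i) * Kinv n (finR i))
            + (v - v⁻¹) • (Kb n (finL i) * Kb n (finR i))))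
  | EFb (i j : Fin (n - 1)) :
      qRel n (E n i * Fb n j - Fb n j * E n i)
        (dlt i j • (Kinv n (finR i) * Kb n (finL i) - Kb n (finR i) * Kinv n (finL i)))
  | EbF (i j : Fin (n - 1)) :
      qRel n (Eb n i * Fg n j - Fg n j * Eb n i)
        (dlt i j • (K n (finR i) * Kb n (finL i) - Kb n (finR i) * K n (finL i)))
  -- (QQ5)
  | EbSq (i : Fin (n - 1)) :
      qRel n (Eb n i ^ 2) ((-((v - v⁻¹) / (v + v⁻¹))) • (E n i ^ 2))
  | FbSq (i : Fin (n - 1)) :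
      qRel n (Fb n i ^ 2) (((v - v⁻¹) / (v + v⁻¹)) • (Fg n i ^ 2))
  | EEbcomm (i j : Fin (n - 1)) (h1 : (i : ℕ) ≠ (j : ℕ) + 1) (h2 : (j : ℕ) ≠ (i : ℕ) + 1) :
      qRel n (E n i * Eb n j - Eb n j * E n i) 0
  | FFbcomm (i j : Fin (n - 1)) (h1 : (i : ℕ) ≠ (j : ℕ) + 1) (h2 : (j : ℕ) ≠ (i : ℕ) + 1) :
      qRel n (Fg n i * Fb n j - Fb n j * Fg n i) 0
  | EEcomm (i j : Fin (n - 1)) (h : (i : ℕ) > (j : ℕ) + 1 ∨ (j : ℕ) > (i : ℕ) + 1) :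
      qRel n (E n i * E n j - E n j * E n i) 0
  | FFcomm (i j : Fin (n - 1)) (h : (i : ℕ) > (j : ℕ) + 1 ∨ (j : ℕ) > (i : ℕ) + 1) :
      qRel n (Fg n i * Fg n j - Fg n j * Fg n i) 0
  | EbEbanti (i j : Fin (n - 1)) (h : (i : ℕ) > (j : ℕ) + 1 ∨ (j : ℕ) > (i : ℕ) + 1) :
      qRel n (Eb n i * Eb n j + Eb n j * Eb n i) 0
  | FbFbanti (i j : Fin (n - 1)) (h : (i : ℕ) > (j : ℕ) + 1 ∨ (j : ℕ) > (i : ℕ) + 1) :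
      qRel n (Fb n i * Fb n j + Fb n j * Fb n i) 0
  | EEnext (j : Fin (n - 1)) (h : (j : ℕ) + 1 < n - 1) :
      qRel n (E n j * E n ⟨(j : ℕ) + 1, h⟩ - v • (E n ⟨(j : ℕ) + 1, h⟩ * E n j))
        (Eb n j * Eb n ⟨(j : ℕ) + 1, h⟩ + v • (Eb n ⟨(j : ℕ) + 1, h⟩ * Eb n j))
  | EEbnext (j : Fin (n - 1)) (h : (j : ℕ) + 1 < n - 1) :
      qRel n (E n j * Eb n ⟨(j : ℕ) + 1, h⟩ - v • (Eb n ⟨(j : ℕ) + 1, h⟩ * E n j))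
        (Eb n j * E n ⟨(j : ℕ) + 1, h⟩ - v • (E n ⟨(j : ℕ) + 1, h⟩ * Eb n j))
  | FFnext (j : Fin (n - 1)) (h : (j : ℕ) + 1 < n - 1) :
      qRel n (Fg n j * Fg n ⟨(j : ℕ) + 1, h⟩ - v • (Fg n ⟨(j : ℕ) + 1, h⟩ * Fg n j))
        (-(Fb n j * Fb n ⟨(j : ℕ) + 1, h⟩ + v • (Fb n ⟨(j : ℕ) + 1, h⟩ * Fb n j)))
  | FFbnext (j : Fin (n - 1)) (h : (j : ℕ) + 1 < n - 1) :
      qRel n (Fg n j * Fb n ⟨(j : ℕ) + 1, h⟩ - v • (Fb n ⟨(j : ℕ) + 1, h⟩ * Fg n j))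
        (Fb n j * Fg n ⟨(j : ℕ) + 1, h⟩ - v • (Fg n ⟨(j : ℕ) + 1, h⟩ * Fb n j))
  -- (QQ6)
  | serreE (i j : Fin (n - 1)) (h : (i : ℕ) = (j : ℕ) + 1 ∨ (j : ℕ) = (i : ℕ) + 1) :
      qRel n (E n i ^ 2 * E n j - (v + v⁻¹) • (E n i * E n j * E n i) + E n j * E n i ^ 2) 0
  | serreF (i j : Fin (n - 1)) (h : (i : ℕ) = (j : ℕ) + 1 ∨ (j : ℕ) = (i : ℕ) + 1) :
      qRel n (Fg n i ^ 2 * Fg n j - (v + v⁻¹) • (Fg n i * Fg n j * Fg n i) + Fg n j * Fg n i ^ 2) 0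
  | serreEEb (i j : Fin (n - 1)) (h : (i : ℕ) = (j : ℕ) + 1 ∨ (j : ℕ) = (i : ℕ) + 1) :
      qRel n (E n i ^ 2 * Eb n j - (v + v⁻¹) • (E n i * Eb n j * E n i) + Eb n j * E n i ^ 2) 0
  | serreFFb (i j : Fin (n - 1)) (h : (i : ℕ) = (j : ℕ) + 1 ∨ (j : ℕ) = (i : ℕ) + 1) :
      qRel n (Fg n i ^ 2 * Fb n j - (v + v⁻¹) • (Fg n i * Fb n j * Fg n i) + Fb n j * Fg n i ^ 2) 0

/-- The quantum queer superalgebra `U_v(q_n)`, as the quotient of the free algebra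
by the two-sided ideal generated by the relations (QQ1)–(QQ6). -/
abbrev Uq (n : ℕ) : Type := RingQuot (qRel n)

/-- The quotient map. -/
noncomputable def mk (n : ℕ) : FA n →ₐ[F] Uq n := RingQuot.mkAlgHom F (qRel n)

noncomputable def uK (n : ℕ) (i : Fin n) : Uq n := mk n (Pre.K n i)
noncomputable def uKinv (n : ℕ) (i : Fin n) : Uq n := mk n (Pre.Kinv n i)
noncomputable def uKb (n : ℕ) (i : Fin n) : Uq n := mk n (Pre.Kb n i)
noncomputable def uE (n : ℕ) (j : Fin (n - 1)) : Uq n := mk n (Pre.E n j)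
noncomputable def uEb (n : ℕ) (j : Fin (n - 1)) : Uq n := mk n (Pre.Eb n j)
noncomputable def uF (n : ℕ) (j : Fin (n - 1)) : Uq n := mk n (Pre.Fg n j)
noncomputable def uFb (n : ℕ) (j : Fin (n - 1)) : Uq n := mk n (Pre.Fb n j)

section Modules

variable (n : ℕ) (M : Type) [AddCommGroup M] [Module F M]
  [Module (Uq n) M] [IsScalarTower F (Uq n) M]

lemma uq_smul_f_smul (u : Uq n) (c : F) (m : M) : u • (c • m) = c • (u • m) := by
  rw [← algebraMap_smul (Uq n) c m, ← mul_smul, ← Algebra.commutes, mul_smul,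
    algebraMap_smul]

/-- The weight space `M_ω = {m ∈ M | K_i m = ω_i m for all i}`. -/
noncomputable def weightSpace (ω : Fin n → Fˣ) : Submodule F M where
  carrier := {m | ∀ i : Fin n, uK n i • m = (ω i : F) • m}
  add_mem' := by
    intro a b ha hb i
    rw [smul_add, ha i, hb i, smul_add]
  zero_mem' := by
    intro i; rw [smul_zero, smul_zero]
  smul_mem' := by
    intro c m hm i
    rw [uq_smul_f_smul, hm i, smul_comm]

/-- `ω` is a weight of `M` if the weight space `M_ω` is nonzero. -/
def IsWeight (ω : Fin n → Fˣ) : Prop := weightSpace n M ω ≠ ⊥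

/-- `M` is a weight module if it is the internal direct sum of its weight spaces. -/
def IsWeightModule : Prop :=
  iSupIndep (fun ω : {ω : Fin n → Fˣ // IsWeight n M ω} => weightSpace n M ω.1) ∧
    (⨆ ω : {ω : Fin n → Fˣ // IsWeight n M ω}, weightSpace n M ω.1) = ⊤

/-- `m` is a highest weight vector of weight `ω`. -/
def IsHWVector (ω : Fin n → Fˣ) (m : M) : Prop :=
  m ≠ 0 ∧ (∀ i : Fin n, uK n i • m = (ω i : F) • m) ∧
    ∀ j : Fin (n - 1), uE n j • m = 0 ∧ uEb n j • m = 0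

/-- `M` is a highest weight module of highest weight `ω`. -/
def IsHWModule (ω : Fin n → Fˣ) : Prop :=
  ∃ m : M, IsHWVector n M ω m ∧ Submodule.span (Uq n) {m} = ⊤

end Modules

/-!
If `X` is any of `E_j, Ē_j, F_j, F̄_j`, then `K_j X = v^(±1) X K_j`. As `K_j` acts invertibly, the
eigenvalues of `X` on `M` are stable under multiplication by `v` or by `v⁻¹`. Since `v` has
infinite multiplicative order, a nonzero eigenvalue would have infinitely many translates, whereas
`X` has only finitely many eigenvalues on `M`.
-/

section InfiniteOrder

theorem not_isOfFinOrder_of_transcendental {R A : Type*} [CommRing R] [Nontrivial R] [Ring A]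
    [Algebra R A] {x : A} (hx : Transcendental R x) : ¬IsOfFinOrder x := by
  intro hfin
  obtain ⟨k, hk, hpow⟩ := isOfFinOrder_iff_pow_eq_one.1 hfin
  have hint : IsIntegral R (x ^ k) := hpow ▸ isIntegral_one
  exact hx (hint.of_pow hk).isAlgebraic

theorem not_isOfFinOrder_zpow {G : Type*} [Group G] {x : G} (hx : ¬IsOfFinOrder x) {k : ℤ}
    (hk : k ≠ 0) : ¬IsOfFinOrder (x ^ k) := by
  rw [← injective_zpow_iff_not_isOfFinOrder] at hx ⊢
  intro a b hab
  have hmul : x ^ (k * a) = x ^ (k * b) := by simpa only [zpow_mul] using hab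
  exact mul_left_cancel₀ hk (hx hmul)

theorem not_isOfFinOrder_ratFunc_X (k : Type*) [Field k] :
    ¬IsOfFinOrder (RatFunc.X : RatFunc k) :=
  not_isOfFinOrder_of_transcendental RatFunc.transcendental_X

theorem not_isOfFinOrder_vU : ¬IsOfFinOrder vU := by
  rw [← Units.isOfFinOrder_val]
  exact not_isOfFinOrder_ratFunc_X ℚ

end InfiniteOrder

section QCommutation

variable {R M : Type*} [CommRing R] [AddCommGroup M] [Module R M]

theorem hasEigenvalue_inv_mul_of_mul_eq_smul_mul {f g : Module.End R M} {q : Rˣ}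
    (hg : Function.Injective g) (hgf : g * f = (q : R) • (f * g)) {μ : R}
    (hμ : f.HasEigenvalue μ) : f.HasEigenvalue (↑q⁻¹ * μ) := by
  obtain ⟨x, hx⟩ := hμ.exists_hasEigenvector
  have hq : g (f x) = q • f (g x) := LinearMap.congr_fun hgf x
  refine Module.End.hasEigenvalue_of_hasEigenvector (x := g x)
    ⟨Module.End.mem_eigenspace_iff.2 ?_, (map_ne_zero_iff g hg).2 hx.2⟩
  calc f (g x) = q⁻¹ • g (f x) := by rw [hq, inv_smul_smul]
    _ = (↑q⁻¹ * μ) • g x := by rw [hx.apply_eq_smul, map_smul, Units.smul_def, smul_smul]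

variable [IsDomain R] [Module.IsTorsionFree R M] [Module.Finite R M]

theorem eq_zero_of_hasEigenvalue_of_mul_eq_smul_mul {f g : Module.End R M} {q : Rˣ}
    (hq : ¬IsOfFinOrder q) (hg : Function.Injective g) (hgf : g * f = (q : R) • (f * g)) {μ : R}
    (hμ : f.HasEigenvalue μ) : μ = 0 := by
  by_contra hμ₀
  have translate_mem (r : ℕ) : f.HasEigenvalue (↑(q⁻¹ ^ r) * μ) := by
    induction r with
    | zero => simpa using hμ
    | succ r ih =>
      simpa [pow_succ', mul_assoc] using hasEigenvalue_inv_mul_of_mul_eq_smul_mul hg hgf ih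
  have translate_injective : Function.Injective fun r : ℕ ↦ (↑(q⁻¹ ^ r) * μ : R) := by
    intro a b hab
    exact injective_pow_iff_not_isOfFinOrder.2 (isOfFinOrder_inv_iff.not.2 hq)
      (Units.ext (mul_right_cancel₀ hμ₀ hab))
  exact Set.infinite_of_injective_forall_mem translate_injective translate_mem
    f.finite_hasEigenvalue

theorem eq_zero_of_smul_eq_smul_of_mul_eq_smul_mul {A : Type*} [Ring A] [Algebra R A] [Module A M]
    [IsScalarTower R A M] {K X : A} {q : Rˣ} (hq : ¬IsOfFinOrder q) (hK : IsUnit K)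
    (hKX : K * X = (q : R) • (X * K)) {m : M} (hm : m ≠ 0) {t : R} (h : X • m = t • m) :
    t = 0 := by
  let ρ : A →ₐ[R] Module.End R M := Algebra.lsmul R R M
  have hinj : Function.Injective (ρ K) := ((Module.End.isUnit_iff _).1 (hK.map ρ)).injective
  have hρ : ρ K * ρ X = (q : R) • (ρ X * ρ K) := by rw [← map_mul, hKX, map_smul, map_mul]
  exact eq_zero_of_hasEigenvalue_of_mul_eq_smul_mul hq hinj hρ
    (Module.End.hasEigenvalue_of_hasEigenvector (x := m) ⟨Module.End.mem_eigenspace_iff.2 h, hm⟩)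

end QCommutation

section Relations

variable {n : ℕ}

theorem mk_eq_mk_of_qRel {a b : FA n} (h : qRel n a b) : mk n a = mk n b :=
  RingQuot.mkAlgHom_rel F h

theorem isUnit_uK (i : Fin n) : IsUnit (uK n i) := by
  have mul_inv : uK n i * uKinv n i = 1 := by
    simpa only [uK, uKinv, map_mul, map_one] using mk_eq_mk_of_qRel (qRel.KKinv i)
  have inv_mul : uKinv n i * uK n i = 1 := by
    simpa only [uK, uKinv, map_mul, map_one] using mk_eq_mk_of_qRel (qRel.KinvK i)
  exact ⟨⟨uK n i, uKinv n i, mul_inv, inv_mul⟩, rfl⟩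

theorem uK_mul_uE (i : Fin n) (j : Fin (n - 1)) :
    uK n i * uE n j = v ^ pr i j • (uE n j * uK n i) := by
  simpa only [uK, uE, map_mul, map_smul] using mk_eq_mk_of_qRel (qRel.KE i j)

theorem uK_mul_uEb (i : Fin n) (j : Fin (n - 1)) :
    uK n i * uEb n j = v ^ pr i j • (uEb n j * uK n i) := by
  simpa only [uK, uEb, map_mul, map_smul] using mk_eq_mk_of_qRel (qRel.KEb i j)

theorem uK_mul_uF (i : Fin n) (j : Fin (n - 1)) :
    uK n i * uF n j = v ^ (-pr i j) • (uF n j * uK n i) := by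
  simpa only [uK, uF, map_mul, map_smul] using mk_eq_mk_of_qRel (qRel.KF i j)

theorem uK_mul_uFb (i : Fin n) (j : Fin (n - 1)) :
    uK n i * uFb n j = v ^ (-pr i j) • (uFb n j * uK n i) := by
  simpa only [uK, uFb, map_mul, map_smul] using mk_eq_mk_of_qRel (qRel.KFb i j)

theorem pr_finL (j : Fin (n - 1)) : pr (finL j) j = 1 := by
  simp [pr, finL]

end Relations

theorem eq_zero_of_smul_eq_smul_of_uK_mul {n : ℕ} {M : Type*} [AddCommGroup M] [Module F M]
    [Module (Uq n) M] [IsScalarTower F (Uq n) M] [FiniteDimensional F M] {i : Fin n} {X : Uq n}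
    {k : ℤ} (hk : k ≠ 0) (hX : uK n i * X = v ^ k • (X * uK n i)) {m : M} (hm : m ≠ 0) {t : F}
    (h : X • m = t • m) : t = 0 := by
  have uK_mul_X : uK n i * X = ((vU ^ k : Fˣ) : F) • (X * uK n i) := by
    rw [Units.val_zpow_eq_zpow_val]
    exact hX
  exact eq_zero_of_smul_eq_smul_of_mul_eq_smul_mul (not_isOfFinOrder_zpow not_isOfFinOrder_vU hk)
    (isUnit_uK i) uK_mul_X hm h

theorem no_nonzero_eigenvalue_general {n : ℕ} {M : Type*} [AddCommGroup M] [Module F M]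
    [Module (Uq n) M] [IsScalarTower F (Uq n) M] [FiniteDimensional F M] {j : Fin (n - 1)}
    {X : Uq n} (hX : X = uE n j ∨ X = uF n j ∨ X = uEb n j ∨ X = uFb n j)
    {m : M} (hm : m ≠ 0) {t : F} (h : X • m = t • m) : t = 0 := by
  have hpos : pr (finL j) j ≠ 0 := by simp [pr_finL]
  have hneg : -pr (finL j) j ≠ 0 := neg_ne_zero.2 hpos
  rcases hX with rfl | rfl | rfl | rfl
  · exact eq_zero_of_smul_eq_smul_of_uK_mul hpos (uK_mul_uE (finL j) j) hm h
  · exact eq_zero_of_smul_eq_smul_of_uK_mul hneg (uK_mul_uF (finL j) j) hm h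
  · exact eq_zero_of_smul_eq_smul_of_uK_mul hpos (uK_mul_uEb (finL j) j) hm h
  · exact eq_zero_of_smul_eq_smul_of_uK_mul hneg (uK_mul_uFb (finL j) j) hm h

/-- Proposition 3.4: on a nonzero finite-dimensional simple weight
`U_v`-module, none of `E_j, F_j, Ē_j, F̄_j` has an eigenvector with nonzero
eigenvalue. -/
theorem no_nonzero_eigenvalue (n : ℕ) (hn : 2 ≤ n)
    (M : Type) [AddCommGroup M] [Module F M] [Module (Uq n) M] [IsScalarTower F (Uq n) M]
    [Nontrivial M] [FiniteDimensional F M]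
    (hsimple : ∀ N : Submodule (Uq n) M, N = ⊥ ∨ N = ⊤)
    (hweight : IsWeightModule n M)
    (j : Fin (n - 1)) (X : Uq n)
    (hX : X = uE n j ∨ X = uF n j ∨ X = uEb n j ∨ X = uFb n j)
    (m : M) (hm : m ≠ 0) (t : F) (h : X • m = t • m) :
    t = 0 :=
  no_nonzero_eigenvalue_general hX hm h

end QueerPaper
end
end

section
/- There exists a (unique) F-algebra homomorphism π_n : U_v(sl_n) → U_v(q_n) satisfying π_n(K_j) = K_jK_{j+1}^{-1}, π_n(K_j^{-1}) = K_j^{-1}K_{j+1}, π_n(E_j) = E_j and π_n(F_j) = F_j for all 1 ≤ j ≤ n−1; i.e. the assignment of generators respects all defining relations of U_v(sl_n). (Section 3 of the paper.) -/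
open scoped BigOperators

noncomputable section

namespace QueerPaper

/-- Generators of the quantized enveloping algebra `U_v(sl_n)`:
`K_j, K_j⁻¹, E_j, F_j` for `1 ≤ j ≤ n−1` (indexed by `Fin (n-1)`, 0-based). -/
inductive SlGen (n : ℕ) : Type
  | K : Fin (n - 1) → SlGen n
  | Kinv : Fin (n - 1) → SlGen n
  | E : Fin (n - 1) → SlGen n
  | F : Fin (n - 1) → SlGen n

abbrev SlFA (n : ℕ) : Type := FreeAlgebra F (SlGen n)

namespace SlPre

variable (n : ℕ)

def K (j : Fin (n - 1)) : SlFA n := FreeAlgebra.ι F (SlGen.K j)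
def Kinv (j : Fin (n - 1)) : SlFA n := FreeAlgebra.ι F (SlGen.Kinv j)
def E (j : Fin (n - 1)) : SlFA n := FreeAlgebra.ι F (SlGen.E j)
def Fg (j : Fin (n - 1)) : SlFA n := FreeAlgebra.ι F (SlGen.F j)

end SlPre

/-- The Cartan matrix of `sl_n`. -/
def cart {n : ℕ} (i j : Fin (n - 1)) : ℤ :=
  if i = j then 2 else if (i : ℕ) = (j : ℕ) + 1 ∨ (j : ℕ) = (i : ℕ) + 1 then -1 else 0

open SlPre in
/-- The defining relations of `U_v(sl_n)`. -/
inductive slRel (n : ℕ) : SlFA n → SlFA n → Prop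
  | KK (i j : Fin (n - 1)) : slRel n (K n i * K n j) (K n j * K n i)
  | KKinv (i : Fin (n - 1)) : slRel n (K n i * Kinv n i) 1
  | KinvK (i : Fin (n - 1)) : slRel n (Kinv n i * K n i) 1
  | KE (i j : Fin (n - 1)) :
      slRel n (K n i * E n j) ((v ^ cart i j) • (E n j * K n i))
  | KF (i j : Fin (n - 1)) :
      slRel n (K n i * Fg n j) ((v ^ (-cart i j)) • (Fg n j * K n i))
  | EF (i j : Fin (n - 1)) :
      slRel n (E n i * Fg n j - Fg n j * E n i)
        ((dlt i j * (1 / (v - v⁻¹))) • (K n i - Kinv n i))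
  | EEcomm (i j : Fin (n - 1)) (h : (i : ℕ) > (j : ℕ) + 1 ∨ (j : ℕ) > (i : ℕ) + 1) :
      slRel n (E n i * E n j) (E n j * E n i)
  | FFcomm (i j : Fin (n - 1)) (h : (i : ℕ) > (j : ℕ) + 1 ∨ (j : ℕ) > (i : ℕ) + 1) :
      slRel n (Fg n i * Fg n j) (Fg n j * Fg n i)
  | serreE (i j : Fin (n - 1)) (h : (i : ℕ) = (j : ℕ) + 1 ∨ (j : ℕ) = (i : ℕ) + 1) :
      slRel n (E n i ^ 2 * E n j - (v + v⁻¹) • (E n i * E n j * E n i) + E n j * E n i ^ 2) 0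
  | serreF (i j : Fin (n - 1)) (h : (i : ℕ) = (j : ℕ) + 1 ∨ (j : ℕ) = (i : ℕ) + 1) :
      slRel n (Fg n i ^ 2 * Fg n j - (v + v⁻¹) • (Fg n i * Fg n j * Fg n i) + Fg n j * Fg n i ^ 2) 0

/-- The quantized enveloping algebra `U_v(sl_n)`. -/
abbrev Usl (n : ℕ) : Type := RingQuot (slRel n)

noncomputable def slmk (n : ℕ) : SlFA n →ₐ[F] Usl n := RingQuot.mkAlgHom F (slRel n)

noncomputable def sK (n : ℕ) (j : Fin (n - 1)) : Usl n := slmk n (SlPre.K n j)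
noncomputable def sKinv (n : ℕ) (j : Fin (n - 1)) : Usl n := slmk n (SlPre.Kinv n j)
noncomputable def sE (n : ℕ) (j : Fin (n - 1)) : Usl n := slmk n (SlPre.E n j)
noncomputable def sF (n : ℕ) (j : Fin (n - 1)) : Usl n := slmk n (SlPre.Fg n j)

/-!
By the universal property of a presented algebra it suffices that the proposed images of the
generators satisfy the relations of `U_v(sl_n)`. The relations in the `E_j` and `F_j` alone, as well
as the commutator `[E_i, F_j]`, are literally among (QQ4)–(QQ6). For the remaining ones, the `K_i`
are commuting units and `E_j` has weight `v ^ ⟨i, j⟩` under conjugation by `K_i`, hence weight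
`v ^ (⟨i, j⟩ - ⟨i + 1, j⟩) = v ^ a_{i,j}` under conjugation by `K_i K_{i+1}⁻¹`; the `F_j` have the
inverse weights.
-/

theorem existsUnique_algHom_ringQuot_freeAlgebra {R X A : Type*} [CommSemiring R] [Semiring A]
    [Algebra R A] {r : FreeAlgebra R X → FreeAlgebra R X → Prop} (f : X → A)
    (hf : ∀ ⦃a b⦄, r a b → FreeAlgebra.lift R f a = FreeAlgebra.lift R f b) :
    ∃! φ : RingQuot r →ₐ[R] A, ∀ x, φ (RingQuot.mkAlgHom R r (FreeAlgebra.ι R x)) = f x := by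
  refine ⟨RingQuot.liftAlgHom R ⟨FreeAlgebra.lift R f, hf⟩, fun x ↦ ?_, fun ψ hψ ↦ ?_⟩
  · rw [RingQuot.liftAlgHom_mkAlgHom_apply, FreeAlgebra.lift_ι_apply]
  · exact RingQuot.liftAlgHom_unique R _ hf ψ ((FreeAlgebra.lift_unique f _).mp (funext hψ))

theorem semiconjBy_units_div_smul {G₀ M : Type*} [CommGroupWithZero G₀] [Monoid M]
    [MulAction G₀ M] [SMulCommClass G₀ M M] [IsScalarTower G₀ M M] {a b : Mˣ} {x : M} {c d : G₀}
    (hd : d ≠ 0) (ha : SemiconjBy (a : M) x (c • x)) (hb : SemiconjBy (b : M) x (d • x)) :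
    SemiconjBy ((a / b : Mˣ) : M) x ((c / d) • x) := by
  have hb_inv : SemiconjBy ((b⁻¹ : Mˣ) : M) x (d⁻¹ • x) := by
    simpa only [inv_smul_smul₀ hd] using hb.units_inv_symm_left.smul_right d⁻¹
  rw [div_eq_mul_inv, Units.val_mul, div_eq_inv_mul, mul_smul]
  exact (ha.smul_right d⁻¹).mul_left hb_inv

theorem cart_eq_pr_sub_pr {n : ℕ} (i j : Fin (n - 1)) :
    cart i j = pr (finL i) j - pr (finR i) j := by
  simp only [cart, pr, finL, finR, Fin.ext_iff]
  split_ifs <;> omega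

section QueerRelations

variable {n : ℕ}

theorem uK_mul_uKinv (i : Fin n) : uK n i * uKinv n i = 1 := by
  simpa only [uK, uKinv, map_mul, map_one] using mk_eq_mk_of_qRel (.KKinv i)

theorem uKinv_mul_uK (i : Fin n) : uKinv n i * uK n i = 1 := by
  simpa only [uK, uKinv, map_mul, map_one] using mk_eq_mk_of_qRel (.KinvK i)

theorem commute_uK (i j : Fin n) : Commute (uK n i) (uK n j) := by
  simpa only [commute_iff_eq, uK, map_mul] using mk_eq_mk_of_qRel (.KK i j)

theorem uK_semiconjBy_uE (i : Fin n) (j : Fin (n - 1)) :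
    SemiconjBy (uK n i) (uE n j) (v ^ pr i j • uE n j) := by
  simpa only [SemiconjBy, uK, uE, map_mul, map_smul, smul_mul_assoc] using
    mk_eq_mk_of_qRel (.KE i j)

theorem uK_semiconjBy_uF (i : Fin n) (j : Fin (n - 1)) :
    SemiconjBy (uK n i) (uF n j) (v ^ (-pr i j) • uF n j) := by
  simpa only [SemiconjBy, uK, uF, map_mul, map_smul, smul_mul_assoc] using
    mk_eq_mk_of_qRel (.KF i j)

theorem uE_mul_uF_sub_uF_mul_uE (i j : Fin (n - 1)) :
    uE n i * uF n j - uF n j * uE n i = (dlt i j * (1 / (v - v⁻¹))) •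
      (uK n (finL i) * uKinv n (finR i) - uKinv n (finL i) * uK n (finR i)) := by
  simpa only [uK, uKinv, uE, uF, map_sub, map_mul, map_smul] using mk_eq_mk_of_qRel (.EF i j)

theorem commute_uE {i j : Fin (n - 1)} (h : (i : ℕ) > (j : ℕ) + 1 ∨ (j : ℕ) > (i : ℕ) + 1) :
    Commute (uE n i) (uE n j) := by
  simpa only [commute_iff_eq, uE, map_sub, map_mul, map_zero, sub_eq_zero] using
    mk_eq_mk_of_qRel (.EEcomm i j h)

theorem commute_uF {i j : Fin (n - 1)} (h : (i : ℕ) > (j : ℕ) + 1 ∨ (j : ℕ) > (i : ℕ) + 1) :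
    Commute (uF n i) (uF n j) := by
  simpa only [commute_iff_eq, uF, map_sub, map_mul, map_zero, sub_eq_zero] using
    mk_eq_mk_of_qRel (.FFcomm i j h)

theorem uE_serre {i j : Fin (n - 1)} (h : (i : ℕ) = (j : ℕ) + 1 ∨ (j : ℕ) = (i : ℕ) + 1) :
    uE n i ^ 2 * uE n j - (v + v⁻¹) • (uE n i * uE n j * uE n i) + uE n j * uE n i ^ 2 = 0 := by
  simpa only [uE, map_add, map_sub, map_mul, map_smul, map_pow, map_zero] using
    mk_eq_mk_of_qRel (.serreE i j h)

theorem uF_serre {i j : Fin (n - 1)} (h : (i : ℕ) = (j : ℕ) + 1 ∨ (j : ℕ) = (i : ℕ) + 1) :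
    uF n i ^ 2 * uF n j - (v + v⁻¹) • (uF n i * uF n j * uF n i) + uF n j * uF n i ^ 2 = 0 := by
  simpa only [uF, map_add, map_sub, map_mul, map_smul, map_pow, map_zero] using
    mk_eq_mk_of_qRel (.serreF i j h)

end QueerRelations

section CartanUnits

variable {n : ℕ}

/-- The generator `K_i` of `U_v(q_n)` as a unit, so that relations involving `K_i⁻¹` can be derived
from those involving `K_i` in the group of units. -/
def uKUnit (i : Fin n) : (Uq n)ˣ :=
  ⟨uK n i, uKinv n i, uK_mul_uKinv i, uKinv_mul_uK i⟩

/-- The unit `K_j K_{j+1}⁻¹` of `U_v(q_n)`, the image of the generator `K_j` of `U_v(sl_n)`. -/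
def cartanUnit (j : Fin (n - 1)) : (Uq n)ˣ :=
  uKUnit (finL j) / uKUnit (finR j)

theorem commute_uKUnit (i j : Fin n) : Commute (uKUnit i) (uKUnit j) :=
  (commute_uK i j).units_of_val

theorem commute_cartanUnit (i j : Fin (n - 1)) : Commute (cartanUnit i) (cartanUnit j) := by
  have commute_uKUnit_cartanUnit (k : Fin n) : Commute (uKUnit k) (cartanUnit j) := by
    rw [cartanUnit, div_eq_mul_inv]
    exact (commute_uKUnit k _).mul_right (commute_uKUnit k _).inv_right
  rw [cartanUnit, div_eq_mul_inv]
  exact (commute_uKUnit_cartanUnit _).mul_left (commute_uKUnit_cartanUnit _).inv_left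

theorem val_cartanUnit (j : Fin (n - 1)) :
    (cartanUnit j : Uq n) = uK n (finL j) * uKinv n (finR j) := by
  rw [cartanUnit, div_eq_mul_inv]
  rfl

theorem val_inv_cartanUnit (j : Fin (n - 1)) :
    ((cartanUnit j)⁻¹ : (Uq n)ˣ) = uKinv n (finL j) * uK n (finR j) := by
  rw [cartanUnit, inv_div, div_eq_mul_inv, (commute_uKUnit _ _).inv_right.eq]
  rfl

theorem cartanUnit_semiconjBy {x : Uq n} {w : Fin n → ℤ}
    (hx : ∀ k, SemiconjBy (uK n k) x (v ^ w k • x)) (i : Fin (n - 1)) :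
    SemiconjBy (cartanUnit i : Uq n) x (v ^ (w (finL i) - w (finR i)) • x) := by
  rw [zpow_sub₀ v_ne_zero]
  exact semiconjBy_units_div_smul (zpow_ne_zero _ v_ne_zero) (hx (finL i)) (hx (finR i))

theorem cartanUnit_semiconjBy_uE (i j : Fin (n - 1)) :
    SemiconjBy (cartanUnit i : Uq n) (uE n j) (v ^ cart i j • uE n j) := by
  rw [cart_eq_pr_sub_pr]
  exact cartanUnit_semiconjBy (uK_semiconjBy_uE · j) i

theorem cartanUnit_semiconjBy_uF (i j : Fin (n - 1)) :
    SemiconjBy (cartanUnit i : Uq n) (uF n j) (v ^ (-cart i j) • uF n j) := by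
  rw [cart_eq_pr_sub_pr, neg_sub, ← neg_sub_neg]
  exact cartanUnit_semiconjBy (uK_semiconjBy_uF · j) i

end CartanUnits

/-- The images under `π_n` of the generators of `U_v(sl_n)`. -/
def piGen (n : ℕ) : SlGen n → Uq n
  | .K j => uK n (finL j) * uKinv n (finR j)
  | .Kinv j => uKinv n (finL j) * uK n (finR j)
  | .E j => uE n j
  | .F j => uF n j

theorem lift_piGen_eq_of_slRel {n : ℕ} ⦃a b : SlFA n⦄ (h : slRel n a b) :
    FreeAlgebra.lift F (piGen n) a = FreeAlgebra.lift F (piGen n) b := by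
  induction h with
    simp only [SlPre.K, SlPre.Kinv, SlPre.E, SlPre.Fg, map_add, map_sub, map_mul, map_smul, map_pow,
      map_one, map_zero, FreeAlgebra.lift_ι_apply, piGen, ← val_cartanUnit, ← val_inv_cartanUnit]
  | KK i j => exact (commute_cartanUnit i j).units_val
  | KKinv i => exact (cartanUnit i).mul_inv
  | KinvK i => exact (cartanUnit i).inv_mul
  | KE i j => simpa only [smul_mul_assoc] using (cartanUnit_semiconjBy_uE i j).eq
  | KF i j => simpa only [smul_mul_assoc] using (cartanUnit_semiconjBy_uF i j).eq
  | EF i j => simpa only [val_cartanUnit, val_inv_cartanUnit] using uE_mul_uF_sub_uF_mul_uE i j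
  | EEcomm i j h => exact commute_uE h
  | FFcomm i j h => exact commute_uF h
  | serreE i j h => exact uE_serre h
  | serreF i j h => exact uF_serre h

theorem SlGen.forall_iff {n : ℕ} {p : SlGen n → Prop} :
    (∀ g, p g) ↔ (∀ j, p (.K j)) ∧ (∀ j, p (.Kinv j)) ∧ (∀ j, p (.E j)) ∧ ∀ j, p (.F j) :=
  ⟨fun h ↦ ⟨fun j ↦ h (.K j), fun j ↦ h (.Kinv j), fun j ↦ h (.E j), fun j ↦ h (.F j)⟩,
    fun ⟨hK, hKinv, hE, hF⟩ g ↦ by cases g with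
      | K j => exact hK j
      | Kinv j => exact hKinv j
      | E j => exact hE j
      | F j => exact hF j⟩

/-- Section 3: there is a unique `F`-algebra homomorphism
`π_n : U_v(sl_n) → U_v(q_n)` with `π_n(K_j) = K_j K_{j+1}⁻¹`,
`π_n(K_j⁻¹) = K_j⁻¹ K_{j+1}`, `π_n(E_j) = E_j` and `π_n(F_j) = F_j`. -/
theorem exists_unique_pi (n : ℕ) (hn : 2 ≤ n) :
    ∃! φ : Usl n →ₐ[F] Uq n,
      (∀ j : Fin (n - 1), φ (sK n j) = uK n (finL j) * uKinv n (finR j)) ∧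
      (∀ j : Fin (n - 1), φ (sKinv n j) = uKinv n (finL j) * uK n (finR j)) ∧
      (∀ j : Fin (n - 1), φ (sE n j) = uE n j) ∧
      (∀ j : Fin (n - 1), φ (sF n j) = uF n j) := by
  have existsUnique_piGen :=
    existsUnique_algHom_ringQuot_freeAlgebra (piGen n) lift_piGen_eq_of_slRel
  exact (existsUnique_congr fun _ ↦ SlGen.forall_iff).mp existsUnique_piGen

end QueerPaper
end
end
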